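/- For every j with 0 ≤ j ≤ n and every C^∞ function f on X one has the conjugation identity e^{R_j} · J[ L^T( e^{−R_j} · (J f) ) ] = L f − σ_j f, i.e. as operators on smooth functions e^{R_j} J L^T J e^{−R_j} = L − σ_j. -/

import Mathlib

open scoped BigOperators

noncomputable section

/-- `Vc d` : vectors in ℝ^d. -/
abbrev Vc (d : ℕ) := Fin d → ℝ
/-- Configurations of `m` oscillators. -/
abbrev Cfg (m d : ℕ) := Fin m → Vc d
/-- Phase space X = p × q × r₁ × rₙ (for a chain of `m` oscillators). -/
abbrev Phs (m d : ℕ) := Cfg m d × Cfg m d × Vc d × Vc d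

variable {m d : ℕ}

/-- unit coordinate vector in the p-block -/
def eP (i : Fin m) (a : Fin d) : Phs m d := (Pi.single i (Pi.single a 1), 0, 0, 0)
/-- unit coordinate vector in the q-block -/
def eQ (i : Fin m) (a : Fin d) : Phs m d := (0, Pi.single i (Pi.single a 1), 0, 0)
/-- unit coordinate vector in the r₁-block -/
def eR1 (a : Fin d) : Phs m d := (0, 0, Pi.single a 1, 0)
/-- unit coordinate vector in the rₙ-block -/
def eRn (a : Fin d) : Phs m d := (0, 0, 0, Pi.single a 1)

/-- directional (partial) derivative -/
def PD (f : Phs m d → ℝ) (x v : Phs m d) : ℝ := fderiv ℝ f x v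

variable {n : ℕ}

/-- total potential V(q) = Σᵢ U⁽¹⁾(qᵢ) + Σᵢ U⁽²⁾(qᵢ − qᵢ₊₁) of a chain of n+2 oscillators -/
def Vtot (U1 U2 : Vc d → ℝ) (q : Cfg (n+2) d) : ℝ :=
  (∑ i, U1 (q i)) + ∑ i : Fin (n+1), U2 (q i.castSucc - q i.succ)

/-- the generator L of the dynamics of the chain coupled to two reservoirs -/
def gen (γ lam T1 Tn : ℝ) (U1 U2 : Vc d → ℝ) (f : Phs (n+2) d → ℝ) (x : Phs (n+2) d) : ℝ :=
  (γ * (T1 * ∑ a, PD (fun y => PD f y (eR1 a)) x (eR1 a)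
        - ∑ a, x.2.2.1 a * PD f x (eR1 a))
    + lam * ((∑ a, x.1 0 a * PD f x (eR1 a)) - ∑ a, x.2.2.1 a * PD f x (eP 0 a)))
  + (γ * (Tn * ∑ a, PD (fun y => PD f y (eRn a)) x (eRn a)
        - ∑ a, x.2.2.2 a * PD f x (eRn a))
    + lam * ((∑ a, x.1 (Fin.last (n+1)) a * PD f x (eRn a))
        - ∑ a, x.2.2.2 a * PD f x (eP (Fin.last (n+1)) a)))
  + ∑ i, ((∑ a, x.1 i a * PD f x (eQ i a))
        - ∑ a, fderiv ℝ (Vtot U1 U2) x.2.1 (Pi.single i (Pi.single a 1)) * PD f x (eP i a))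

/-- the formal adjoint Lᵀ of L with respect to Lebesgue measure -/
def genT (γ lam T1 Tn : ℝ) (U1 U2 : Vc d → ℝ) (g : Phs (n+2) d → ℝ) (x : Phs (n+2) d) : ℝ :=
  (γ * (T1 * ∑ a, PD (fun y => PD g y (eR1 a)) x (eR1 a)
        + ∑ a, PD (fun y => y.2.2.1 a * g y) x (eR1 a))
    - lam * ((∑ a, x.1 0 a * PD g x (eR1 a)) - ∑ a, x.2.2.1 a * PD g x (eP 0 a)))
  + (γ * (Tn * ∑ a, PD (fun y => PD g y (eRn a)) x (eRn a)
        + ∑ a, PD (fun y => y.2.2.2 a * g y) x (eRn a))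
    - lam * ((∑ a, x.1 (Fin.last (n+1)) a * PD g x (eRn a))
        - ∑ a, x.2.2.2 a * PD g x (eP (Fin.last (n+1)) a)))
  - ∑ i, ((∑ a, x.1 i a * PD g x (eQ i a))
        - ∑ a, fderiv ℝ (Vtot U1 U2) x.2.1 (Pi.single i (Pi.single a 1)) * PD g x (eP i a))

/-- time reversal (Jf)(p,q,r₁,rₙ) = f(−p,q,r₁,rₙ) -/
def Jop (f : Phs m d → ℝ) : Phs m d → ℝ := fun x => f (-x.1, x.2.1, x.2.2.1, x.2.2.2)

/-- nat-indexed access to the oscillator coordinates (junk value outside the range) -/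
def cfgNat (q : Cfg (n+2) d) (k : ℕ) : Vc d := if h : k < n + 2 then q ⟨k, h⟩ else 0

/-- local energies H_k, 0-indexed: k ∈ {0, …, n+1} -/
def Hloc (U1 U2 : Vc d → ℝ) (k : ℕ) (x : Phs (n+2) d) : ℝ :=
  (∑ a, (cfgNat x.1 k a) ^ 2) / 2 + U1 (cfgNat x.2.1 k)
  + (if k = 0 then 0 else (1/2) * U2 (cfgNat x.2.1 (k-1) - cfgNat x.2.1 k))
  + (if k = n + 1 then 0 else (1/2) * U2 (cfgNat x.2.1 k - cfgNat x.2.1 (k+1)))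

/-- heat flows Φ_j, j ∈ {0, …, n+2}: Φ_0 = −λr₁·p_0 is the flow from the left
reservoir into the chain, Φ_{n+2} = λrₙ·p_{n+1} the flow into the right reservoir,
and for 1 ≤ j ≤ n+1, Φ_j is the flow from the (0-indexed) oscillator j−1 to the
oscillator j. -/
def heatFlow (lam : ℝ) (U2 : Vc d → ℝ) (j : ℕ) (x : Phs (n+2) d) : ℝ :=
  if j = 0 then - lam * ∑ a, x.2.2.1 a * x.1 0 a
  else if j = n + 2 then lam * ∑ a, x.2.2.2 a * x.1 (Fin.last (n+1)) a
  else ∑ a, ((cfgNat x.1 (j-1) a + cfgNat x.1 j a) / 2)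
        * fderiv ℝ U2 (cfgNat x.2.1 (j-1) - cfgNat x.2.1 j) (Pi.single a 1)

/-- entropy production σ_j = (1/Tₙ − 1/T₁) Φ_j -/
def sigmaEP (lam T1 Tn : ℝ) (U2 : Vc d → ℝ) (j : ℕ) (x : Phs (n+2) d) : ℝ :=
  (1 / Tn - 1 / T1) * heatFlow lam U2 j x

/-- two-temperatures Gibbs exponent R_j, j ∈ {0, …, n+2}: the first j oscillators
are weighted with 1/T₁, the remaining ones with 1/Tₙ. -/
def Rj (T1 Tn : ℝ) (U1 U2 : Vc d → ℝ) (j : ℕ) (x : Phs (n+2) d) : ℝ :=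
  (1 / T1) * ((∑ a, (x.2.2.1 a) ^ 2) / 2 + ∑ k ∈ Finset.range j, Hloc U1 U2 k x)
  + (1 / Tn) * ((∑ k ∈ Finset.Ico j (n+2), Hloc U1 U2 k x) + (∑ a, (x.2.2.2 a) ^ 2) / 2)

/-!
Write `L = γ S + A`, where `S` is the Ornstein–Uhlenbeck operator of the two reservoirs and `A` is
the derivative along a vector field (`drift`). This field is divergence free and odd under the time
reversal `J`, whereas `S` does not see `J`; hence `Lᵀ = γ Sᵀ - A` and `J Lᵀ J = γ Sᵀ + A`.
Conjugation by `e^R`, `R = R_j`, turns `Sᵀ` back into `S`, because `∂R/∂rᵢ = rᵢ / Tᵢ` at both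
reservoirs, and turns `A` into `A - (A R)`. Finally the local energy balance `A H_k = Φ_k - Φ_{k+1}`
telescopes, once over each of the two temperature blocks of `R_j`, to `A R_j = σ_j`.
-/

section OrnsteinUhlenbeck

variable {E ι : Type*} [NormedAddCommGroup E] [NormedSpace ℝ E]

theorem fderiv_exp_neg_mul_apply {R f : E → ℝ} {x : E} (hR : DifferentiableAt ℝ R x)
    (hf : DifferentiableAt ℝ f x) (v : E) :
    fderiv ℝ (fun y => Real.exp (-R y) * f y) x v
      = Real.exp (-R x) * (fderiv ℝ f x v - fderiv ℝ R x v * f x) := by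
  have h : HasFDerivAt (fun y => Real.exp (-R y) * f y) _ x :=
    hR.hasFDerivAt.neg.exp.mul hf.hasFDerivAt
  rw [h.fderiv]
  simp only [add_apply, smul_apply, neg_apply, Pi.neg_apply, smul_eq_mul]
  ring

-- Both terms on the left come from the single flux `∂ᵥ(e⁻ᴿ f) + (∂ᵥR) e⁻ᴿ f = e⁻ᴿ ∂ᵥf`.
theorem fderiv_fderiv_exp_neg_mul_add {R f : E → ℝ} {v : E} (hR : Differentiable ℝ R)
    (hRv : Differentiable ℝ fun y => fderiv ℝ R y v) (hf : Differentiable ℝ f)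
    (hfv : Differentiable ℝ fun y => fderiv ℝ f y v) (x : E) :
    fderiv ℝ (fun y => fderiv ℝ (fun z => Real.exp (-R z) * f z) y v) x v
        + fderiv ℝ (fun y => fderiv ℝ R y v * (Real.exp (-R y) * f y)) x v
      = Real.exp (-R x)
          * (fderiv ℝ (fun y => fderiv ℝ f y v) x v - fderiv ℝ R x v * fderiv ℝ f x v) := by
  simp_rw [fun y => fderiv_exp_neg_mul_apply (hR y) (hf y) v]
  rw [← fderiv_exp_neg_mul_apply (hR x) (hfv x), ← add_apply, ← fderiv_fun_add]
  · congr! 3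
    ring
  · exact (hR.neg.exp.mul (hfv.sub (hRv.mul hf))) x
  · exact (hRv.mul (hR.neg.exp.mul hf)) x

variable [Fintype ι]

/-- The operator `T Δ - r · ∇` along the directions `e a`. With `r a` the coordinate dual to `e a`,
this is the Ornstein–Uhlenbeck generator of a reservoir at temperature `T`. -/
def ouGen (T : ℝ) (e : ι → E) (r : ι → E → ℝ) (f : E → ℝ) (x : E) : ℝ :=
  T * ∑ a, fderiv ℝ (fun y => fderiv ℝ f y (e a)) x (e a) - ∑ a, r a x * fderiv ℝ f x (e a)

/-- The operator `g ↦ T Δ g + div (r g)` along the directions `e a`, the formal Lebesgue adjoint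
of `ouGen T e r`. -/
def ouAdjoint (T : ℝ) (e : ι → E) (r : ι → E → ℝ) (g : E → ℝ) (x : E) : ℝ :=
  T * ∑ a, fderiv ℝ (fun y => fderiv ℝ g y (e a)) x (e a)
    + ∑ a, fderiv ℝ (fun y => r a y * g y) x (e a)

theorem exp_mul_ouAdjoint_exp_neg_mul {T : ℝ} {e : ι → E} {r : ι → E → ℝ} {R f : E → ℝ}
    (hT : T ≠ 0) (hr : ∀ a, Differentiable ℝ (r a)) (hR : Differentiable ℝ R)
    (hRr : ∀ y a, fderiv ℝ R y (e a) = r a y / T) (hf : ContDiff ℝ 2 f) (x : E) :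
    Real.exp (R x) * ouAdjoint T e r (fun y => Real.exp (-R y) * f y) x = ouGen T e r f x := by
  have hf' : Differentiable ℝ (fderiv ℝ f) :=
    (hf.fderiv_right (m := 1) (by norm_num)).differentiable one_ne_zero
  have hcoord (a : ι) : T * fderiv ℝ (fun y => fderiv ℝ (fun z => Real.exp (-R z) * f z) y (e a))
        x (e a) + fderiv ℝ (fun y => r a y * (Real.exp (-R y) * f y)) x (e a)
      = Real.exp (-R x)
          * (T * fderiv ℝ (fun y => fderiv ℝ f y (e a)) x (e a) - r a x * fderiv ℝ f x (e a)) := by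
    have hRa : Differentiable ℝ fun y => fderiv ℝ R y (e a) := by
      simp only [hRr, div_eq_mul_inv]
      exact (hr a).mul_const _
    have hdf : Differentiable ℝ f := hf.differentiable two_ne_zero
    have hra (y : E) : r a y = T * fderiv ℝ R y (e a) := by rw [hRr, mul_div_cancel₀ _ hT]
    simp only [hra, mul_assoc T]
    have hflux : Differentiable ℝ fun y => fderiv ℝ R y (e a) * (Real.exp (-R y) * f y) :=
      hRa.mul (hR.neg.exp.mul hdf)
    rw [fderiv_const_mul (hflux x), smul_apply, smul_eq_mul, ← mul_add,
      fderiv_fderiv_exp_neg_mul_add hR hRa hdf (hf'.clm_apply (differentiable_const _))]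
    ring
  simp only [ouAdjoint, ouGen, Finset.mul_sum, ← Finset.sum_add_distrib, ← Finset.sum_sub_distrib,
    hcoord]
  simp only [← mul_assoc, ← Real.exp_add, add_neg_cancel, Real.exp_zero, one_mul]

theorem ouAdjoint_comp (T : ℝ) {e : ι → E} {r : ι → E → ℝ} {Φ : E ≃L[ℝ] E}
    (he : ∀ a, Φ (e a) = e a) (hr : ∀ a y, r a (Φ y) = r a y) (g : E → ℝ) (x : E) :
    ouAdjoint T e r (g ∘ Φ) x = ouAdjoint T e r g (Φ x) := by
  have hcomp (h : E → ℝ) (y : E) (a : ι) :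
      fderiv ℝ (h ∘ Φ) y (e a) = fderiv ℝ h (Φ y) (e a) := by
    rw [Φ.comp_right_fderiv, ContinuousLinearMap.comp_apply, ContinuousLinearEquiv.coe_coe, he]
  have hmul (a : ι) : (fun y => r a y * (g ∘ Φ) y) = (fun y => r a y * g y) ∘ Φ := by
    ext y; simp only [Function.comp_apply, hr]
  have hsnd (a : ι) :
      (fun y => fderiv ℝ (g ∘ Φ) y (e a)) = (fun y => fderiv ℝ g y (e a)) ∘ Φ :=
    funext fun y => hcomp g y a
  simp only [ouAdjoint, hmul, hsnd]
  simp only [hcomp]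

end OrnsteinUhlenbeck

theorem clm_apply_eq_sum_single {ι : Type*} [Fintype ι] [DecidableEq ι] (A : (ι → ℝ) →L[ℝ] ℝ)
    (v : ι → ℝ) : A v = ∑ a, v a * A (Pi.single a 1) := by
  conv_lhs => rw [pi_eq_sum_univ' v]
  simp only [map_sum, map_smul, smul_eq_mul]

theorem sum_sum_single_apply_mul (k : Fin m) (r : Vc d) (F : Fin m → Fin d → ℝ) :
    ∑ i, ∑ a, (Pi.single k r : Cfg m d) i a * F i a = ∑ a, r a * F k a := by
  rw [Finset.sum_eq_single_of_mem k (Finset.mem_univ k) fun i _ hi => by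
    simp [Pi.single_eq_of_ne hi]]
  simp only [Pi.single_eq_same]

theorem PD_eq_sum (f : Phs m d → ℝ) (x v : Phs m d) :
    PD f x v = (∑ i, ∑ a, v.1 i a * PD f x (eP i a)) + (∑ i, ∑ a, v.2.1 i a * PD f x (eQ i a))
      + (∑ a, v.2.2.1 a * PD f x (eR1 a)) + ∑ a, v.2.2.2 a * PD f x (eRn a) := by
  have hv : v = (∑ i, ∑ a, v.1 i a • eP i a) + (∑ i, ∑ a, v.2.1 i a • eQ i a)
      + (∑ a, v.2.2.1 a • eR1 a) + ∑ a, v.2.2.2 a • eRn a := by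
    ext <;> simp [eP, eQ, eR1, eRn, Prod.fst_sum, Prod.snd_sum, Finset.sum_apply, Pi.single_apply]
  conv_lhs => rw [hv, PD]
  simp only [map_add, map_sum, map_smul, smul_eq_mul, PD]

/-- The gradient `∇V` of the total potential. -/
def gradVtot (U1 U2 : Vc d → ℝ) (q : Cfg (n + 2) d) : Cfg (n + 2) d :=
  fun i a => fderiv ℝ (Vtot U1 U2) q (Pi.single i (Pi.single a 1))

/-- The deterministic, friction-free part of the dynamics: Hamilton's equations of the chain
together with its linear coupling to the reservoirs. -/
def drift (lam : ℝ) (U1 U2 : Vc d → ℝ) (x : Phs (n + 2) d) : Phs (n + 2) d :=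
  (-gradVtot U1 U2 x.2.1 - lam • (Pi.single 0 x.2.2.1 + Pi.single (Fin.last (n + 1)) x.2.2.2),
    x.1, lam • x.1 0, lam • x.1 (Fin.last (n + 1)))

theorem PD_drift (lam : ℝ) (U1 U2 : Vc d → ℝ) (f : Phs (n + 2) d → ℝ) (x : Phs (n + 2) d) :
    PD f x (drift lam U1 U2 x)
      = lam * ((∑ a, x.1 0 a * PD f x (eR1 a)) - ∑ a, x.2.2.1 a * PD f x (eP 0 a))
        + lam * ((∑ a, x.1 (Fin.last (n + 1)) a * PD f x (eRn a))
          - ∑ a, x.2.2.2 a * PD f x (eP (Fin.last (n + 1)) a))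
        + ∑ i, ((∑ a, x.1 i a * PD f x (eQ i a))
          - ∑ a, fderiv ℝ (Vtot U1 U2) x.2.1 (Pi.single i (Pi.single a 1)) * PD f x (eP i a)) := by
  rw [PD_eq_sum]
  simp only [drift, gradVtot, Pi.sub_apply, Pi.neg_apply, Pi.smul_apply, Pi.add_apply, smul_eq_mul,
    sub_mul, neg_mul, mul_assoc, add_mul, mul_add, Finset.sum_sub_distrib, Finset.sum_neg_distrib,
    Finset.sum_add_distrib, ← Finset.mul_sum, sum_sum_single_apply_mul]
  ring

theorem gen_eq_ouGen_add_PD_drift (γ lam T1 Tn : ℝ) (U1 U2 : Vc d → ℝ) (f : Phs (n + 2) d → ℝ)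
    (x : Phs (n + 2) d) :
    gen γ lam T1 Tn U1 U2 f x
      = γ * ouGen T1 eR1 (fun a y => y.2.2.1 a) f x + γ * ouGen Tn eRn (fun a y => y.2.2.2 a) f x
        + PD f x (drift lam U1 U2 x) := by
  rw [PD_drift]
  simp only [gen, ouGen, PD]
  ring

theorem genT_eq_ouAdjoint_sub_PD_drift (γ lam T1 Tn : ℝ) (U1 U2 : Vc d → ℝ)
    (g : Phs (n + 2) d → ℝ) (x : Phs (n + 2) d) :
    genT γ lam T1 Tn U1 U2 g x
      = γ * ouAdjoint T1 eR1 (fun a y => y.2.2.1 a) g x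
        + γ * ouAdjoint Tn eRn (fun a y => y.2.2.2 a) g x - PD g x (drift lam U1 U2 x) := by
  rw [PD_drift]
  simp only [genT, ouAdjoint, PD]
  ring

/-- The time reversal `(p, q, r₁, rₙ) ↦ (-p, q, r₁, rₙ)` of phase space, so that
`Jop f = f ∘ timeReversal`. -/
def timeReversal : Phs m d ≃L[ℝ] Phs m d :=
  (ContinuousLinearEquiv.neg ℝ).prodCongr (ContinuousLinearEquiv.refl ℝ _)

theorem timeReversal_apply (x : Phs m d) : timeReversal x = (-x.1, x.2) := rfl

theorem timeReversal_timeReversal (x : Phs m d) : timeReversal (timeReversal x) = x := by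
  simp only [timeReversal_apply, neg_neg]

theorem timeReversal_eR1 (a : Fin d) : timeReversal (eR1 a : Phs m d) = eR1 a := by
  simp only [timeReversal_apply, eR1, neg_zero]

theorem timeReversal_eRn (a : Fin d) : timeReversal (eRn a : Phs m d) = eRn a := by
  simp only [timeReversal_apply, eRn, neg_zero]

theorem Jop_eq_comp_timeReversal (f : Phs m d → ℝ) : Jop f = f ∘ timeReversal := rfl

theorem timeReversal_drift_timeReversal (lam : ℝ) (U1 U2 : Vc d → ℝ) (x : Phs (n + 2) d) :
    timeReversal (drift lam U1 U2 (timeReversal x)) = -drift lam U1 U2 x := by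
  simp [timeReversal_apply, drift]

theorem Jop_genT_Jop (γ lam T1 Tn : ℝ) (U1 U2 : Vc d → ℝ) (g : Phs (n + 2) d → ℝ)
    (x : Phs (n + 2) d) :
    Jop (genT γ lam T1 Tn U1 U2 (Jop g)) x
      = γ * ouAdjoint T1 eR1 (fun a y => y.2.2.1 a) g x
        + γ * ouAdjoint Tn eRn (fun a y => y.2.2.2 a) g x + PD g x (drift lam U1 U2 x) := by
  simp only [Jop_eq_comp_timeReversal, Function.comp_apply]
  rw [genT_eq_ouAdjoint_sub_PD_drift, ouAdjoint_comp T1 timeReversal_eR1 fun _ _ => rfl,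
    ouAdjoint_comp Tn timeReversal_eRn fun _ _ => rfl, PD, timeReversal.comp_right_fderiv,
    ContinuousLinearMap.comp_apply, ContinuousLinearEquiv.coe_coe,
    timeReversal_drift_timeReversal, timeReversal_timeReversal, map_neg, sub_neg_eq_add, PD]

section LocalEnergy

theorem hasFDerivAt_half_sum_sq {E ι : Type*} [NormedAddCommGroup E] [NormedSpace ℝ E] [Fintype ι]
    (A : E →L[ℝ] ι → ℝ) (x : E) :
    HasFDerivAt (fun y => (∑ a, A y a ^ 2) / 2)
      (∑ a, A x a • (ContinuousLinearMap.proj (R := ℝ) (φ := fun _ => ℝ) a).comp A) x := by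
  have hcoord (a : ι) := ((ContinuousLinearMap.proj (R := ℝ) (φ := fun _ : ι => ℝ) a).comp
    A).hasFDerivAt (x := x)
  have h := (HasFDerivAt.fun_sum (u := Finset.univ) fun a _ => (hcoord a).pow 2).mul_const
    (2⁻¹ : ℝ)
  convert! h using 1
  ext v
  simp [Finset.mul_sum, mul_assoc]

/-- The coordinate map `q ↦ cfgNat q k` as a continuous linear map. -/
def cfgNatL (k : ℕ) : Cfg (n + 2) d →L[ℝ] Vc d :=
  if h : k < n + 2 then ContinuousLinearMap.proj (R := ℝ) (φ := fun _ => Vc d) ⟨k, h⟩ else 0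

theorem cfgNatL_apply (k : ℕ) (q : Cfg (n + 2) d) : cfgNatL k q = cfgNat q k := by
  unfold cfgNatL cfgNat
  split <;> rfl

theorem cfgNat_val (q : Cfg (n + 2) d) (i : Fin (n + 2)) : cfgNat q i = q i :=
  dif_pos i.isLt

theorem cfgNat_castSucc (q : Cfg (n + 2) d) (i : Fin (n + 1)) : cfgNat q i = q i.castSucc :=
  cfgNat_val q i.castSucc

theorem cfgNat_succ (q : Cfg (n + 2) d) (i : Fin (n + 1)) : cfgNat q (i + 1) = q i.succ :=
  cfgNat_val q i.succ

theorem cfgNat_neg (q : Cfg (n + 2) d) (k : ℕ) : cfgNat (-q) k = -cfgNat q k := by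
  simp only [← cfgNatL_apply, map_neg]

/-- The momentum of oscillator `k` as a continuous linear map on phase space. -/
def momL (k : ℕ) : Phs (n + 2) d →L[ℝ] Vc d :=
  (cfgNatL k).comp (ContinuousLinearMap.fst ℝ _ _)

/-- The position of oscillator `k` as a continuous linear map on phase space. -/
def posL (k : ℕ) : Phs (n + 2) d →L[ℝ] Vc d :=
  (cfgNatL k).comp ((ContinuousLinearMap.fst ℝ _ _).comp (ContinuousLinearMap.snd ℝ _ _))

theorem momL_apply (k : ℕ) (x : Phs (n + 2) d) : momL k x = cfgNat x.1 k := cfgNatL_apply k x.1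

theorem posL_apply (k : ℕ) (x : Phs (n + 2) d) : posL k x = cfgNat x.2.1 k := cfgNatL_apply k x.2.1

variable {U1 U2 : Vc d → ℝ}

theorem differentiable_Hloc (h1 : Differentiable ℝ U1) (h2 : Differentiable ℝ U2) (k : ℕ) :
    Differentiable ℝ (Hloc U1 U2 k : Phs (n + 2) d → ℝ) := by
  unfold Hloc
  simp only [← momL_apply, ← posL_apply]
  split_ifs <;> fun_prop

theorem fderiv_Hloc_apply (h1 : Differentiable ℝ U1) (h2 : Differentiable ℝ U2) (k : ℕ)
    (x v : Phs (n + 2) d) :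
    fderiv ℝ (Hloc U1 U2 k) x v
      = (∑ a, cfgNat x.1 k a * cfgNat v.1 k a) + fderiv ℝ U1 (cfgNat x.2.1 k) (cfgNat v.2.1 k)
        + (if k = 0 then 0 else 1 / 2 * fderiv ℝ U2 (cfgNat x.2.1 (k - 1) - cfgNat x.2.1 k)
            (cfgNat v.2.1 (k - 1) - cfgNat v.2.1 k))
        + (if k = n + 1 then 0 else 1 / 2 * fderiv ℝ U2 (cfgNat x.2.1 k - cfgNat x.2.1 (k + 1))
            (cfgNat v.2.1 k - cfgNat v.2.1 (k + 1))) := by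
  have hbond (c : Prop) [Decidable c] (A : Phs (n + 2) d →L[ℝ] Vc d) :
      HasFDerivAt (fun y => if c then 0 else 1 / 2 * U2 (A y))
        (if c then 0 else (1 / 2 : ℝ) • (fderiv ℝ U2 (A x)).comp A) x := by
    split_ifs
    · exact hasFDerivAt_const 0 x
    · exact ((h2 (A x)).hasFDerivAt.comp x A.hasFDerivAt).const_mul _
  have h := (((hasFDerivAt_half_sum_sq (momL k) x).add
    ((h1 (posL k x)).hasFDerivAt.comp x (posL k).hasFDerivAt)).add
      (hbond (k = 0) (posL (k - 1) - posL k))).add (hbond (k = n + 1) (posL k - posL (k + 1)))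
  have hHloc := h.congr_of_eventuallyEq (f₁ := Hloc U1 U2 k) (.of_forall fun y => by
    simp [Hloc, momL_apply, posL_apply])
  rw [hHloc.fderiv]
  simp [apply_ite (fun A : Phs (n + 2) d →L[ℝ] ℝ => A v), momL_apply, posL_apply]

theorem fderiv_Vtot_apply (h1 : Differentiable ℝ U1) (h2 : Differentiable ℝ U2)
    (q v : Cfg (n + 2) d) :
    fderiv ℝ (Vtot U1 U2) q v
      = (∑ i, fderiv ℝ U1 (q i) (v i))
        + ∑ i : Fin (n + 1), fderiv ℝ U2 (q i.castSucc - q i.succ) (v i.castSucc - v i.succ) := by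
  have hcoord (i : Fin (n + 2)) := (ContinuousLinearMap.proj (R := ℝ) (φ := fun _ : Fin (n + 2) =>
    Vc d) i).hasFDerivAt (x := q)
  have h : HasFDerivAt (Vtot U1 U2) _ q :=
    (HasFDerivAt.fun_sum fun i _ => (h1 (q i)).hasFDerivAt.comp q (hcoord i)).add
      (HasFDerivAt.fun_sum fun i _ => (h2 (q (Fin.castSucc i) - q i.succ)).hasFDerivAt.comp q
        ((hcoord i.castSucc).sub (hcoord i.succ)))
  rw [h.fderiv]
  simp

theorem fderiv_Vtot_single (h1 : Differentiable ℝ U1) (h2 : Differentiable ℝ U2)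
    (q : Cfg (n + 2) d) (i : Fin (n + 2)) (w : Vc d) :
    fderiv ℝ (Vtot U1 U2) q (Pi.single i w)
      = fderiv ℝ U1 (cfgNat q i) w
        - (if (i : ℕ) = 0 then 0 else fderiv ℝ U2 (cfgNat q (i - 1) - cfgNat q i) w)
        + (if (i : ℕ) = n + 1 then 0 else fderiv ℝ U2 (cfgNat q i - cfgNat q (i + 1)) w) := by
  have hsite : ∑ k, fderiv ℝ U1 (q k) ((Pi.single i w : Cfg (n + 2) d) k)
      = fderiv ℝ U1 (cfgNat q i) w := by
    rw [Fintype.sum_eq_single i fun k hk => by rw [Pi.single_eq_of_ne hk, map_zero],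
      Pi.single_eq_same, cfgNat_val]
  have hleft : ∑ k : Fin (n + 1), fderiv ℝ U2 (q k.castSucc - q k.succ)
        ((Pi.single i w : Cfg (n + 2) d) k.succ)
      = if (i : ℕ) = 0 then 0 else fderiv ℝ U2 (cfgNat q (i - 1) - cfgNat q i) w := by
    cases i using Fin.cases with
    | zero => simp
    | succ j => simp [Pi.single_apply, apply_ite, cfgNat_castSucc, cfgNat_succ]
  have hright : ∑ k : Fin (n + 1), fderiv ℝ U2 (q k.castSucc - q k.succ)
        ((Pi.single i w : Cfg (n + 2) d) k.castSucc)
      = if (i : ℕ) = n + 1 then 0 else fderiv ℝ U2 (cfgNat q i - cfgNat q (i + 1)) w := by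
    cases i using Fin.lastCases with
    | last => simp
    | cast j => simp [Pi.single_apply, apply_ite, cfgNat_castSucc, cfgNat_succ, j.isLt.ne]
  rw [fderiv_Vtot_apply h1 h2, hsite]
  simp only [map_sub, Finset.sum_sub_distrib, hleft, hright]
  ring

theorem heatFlow_of_ne_zero_of_ne (lam : ℝ) {k : ℕ} (h0 : k ≠ 0) (hn : k ≠ n + 2)
    (x : Phs (n + 2) d) :
    heatFlow lam U2 k x = 1 / 2 * fderiv ℝ U2 (cfgNat x.2.1 (k - 1) - cfgNat x.2.1 k)
      (cfgNat x.1 (k - 1) + cfgNat x.1 k) := by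
  rw [heatFlow, if_neg h0, if_neg hn, clm_apply_eq_sum_single, Finset.mul_sum]
  refine Finset.sum_congr rfl fun a _ => ?_
  rw [Pi.add_apply]
  ring

theorem sum_mul_single_apply (p : Cfg m d) (k i : Fin m) (r : Vc d) :
    ∑ a, p i a * (Pi.single k r : Cfg m d) i a = if i = k then ∑ a, r a * p k a else 0 := by
  split_ifs with h
  · subst h
    simp only [Pi.single_eq_same, mul_comm]
  · simp only [Pi.single_eq_of_ne h, Pi.zero_apply, mul_zero, Finset.sum_const_zero]

theorem sum_mul_gradVtot (U1 U2 : Vc d → ℝ) (q : Cfg (n + 2) d) (i : Fin (n + 2)) (w : Vc d) :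
    ∑ a, w a * gradVtot U1 U2 q i a = fderiv ℝ (Vtot U1 U2) q (Pi.single i w) :=
  (clm_apply_eq_sum_single
    ((fderiv ℝ (Vtot U1 U2) q).comp (ContinuousLinearMap.single ℝ (fun _ => Vc d) i)) w).symm

theorem sum_mom_mul_drift_fst (lam : ℝ) (U1 U2 : Vc d → ℝ) (x : Phs (n + 2) d) (i : Fin (n + 2)) :
    ∑ a, x.1 i a * (drift lam U1 U2 x).1 i a
      = -fderiv ℝ (Vtot U1 U2) x.2.1 (Pi.single i (x.1 i))
        - lam * ((if i = 0 then ∑ a, x.2.2.1 a * x.1 0 a else 0)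
          + if i = Fin.last (n + 1) then ∑ a, x.2.2.2 a * x.1 (Fin.last (n + 1)) a else 0) := by
  rw [← sum_mul_gradVtot, ← sum_mul_single_apply x.1, ← sum_mul_single_apply x.1]
  simp only [drift, Pi.sub_apply, Pi.neg_apply, Pi.smul_apply, Pi.add_apply, smul_eq_mul,
    ← Finset.sum_neg_distrib, ← Finset.sum_add_distrib, Finset.mul_sum, ← Finset.sum_sub_distrib]
  exact Finset.sum_congr rfl fun a _ => by ring

theorem fderiv_Hloc_drift (h1 : Differentiable ℝ U1) (h2 : Differentiable ℝ U2) (lam : ℝ) {k : ℕ}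
    (hk : k < n + 2) (x : Phs (n + 2) d) :
    fderiv ℝ (Hloc U1 U2 k) x (drift lam U1 U2 x)
      = heatFlow lam U2 k x - heatFlow lam U2 (k + 1) x := by
  lift k to Fin (n + 2) using hk
  have hpower := sum_mom_mul_drift_fst lam U1 U2 x k
  rw [fderiv_Vtot_single h1 h2, ← cfgNat_val x.1 k, ← cfgNat_val (drift lam U1 U2 x).1 k] at hpower
  simp only [Fin.ext_iff, Fin.val_zero, Fin.val_last] at hpower
  have hvel : (drift lam U1 U2 x).2.1 = x.1 := rfl
  have hleft (h : (k : ℕ) ≠ 0) := heatFlow_of_ne_zero_of_ne (U2 := U2) lam h k.isLt.ne x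
  have hright (h : (k : ℕ) ≠ n + 1) := heatFlow_of_ne_zero_of_ne (U2 := U2) lam
    (k : ℕ).add_one_ne_zero (by omega : (k : ℕ) + 1 ≠ n + 2) x
  rw [fderiv_Hloc_apply h1 h2, hpower, hvel]
  by_cases h0 : (k : ℕ) = 0
  · have hn : (k : ℕ) ≠ n + 1 := by omega
    have hleft₀ : heatFlow lam U2 k x = -lam * ∑ a, x.2.2.1 a * x.1 0 a := if_pos h0
    rw [hleft₀, hright hn]
    simp only [if_pos h0, if_neg hn, map_add, map_sub, Nat.add_sub_cancel]
    ring
  by_cases hn : (k : ℕ) = n + 1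
  · have hright₀ : heatFlow lam U2 (k + 1) x
        = lam * ∑ a, x.2.2.2 a * x.1 (Fin.last (n + 1)) a := by
      rw [hn, heatFlow, if_neg (n + 1).add_one_ne_zero, if_pos rfl]
    rw [hleft h0, hright₀]
    simp only [if_neg h0, if_pos hn, map_add, map_sub]
    ring
  · rw [hleft h0, hright hn]
    simp only [if_neg h0, if_neg hn, map_add, map_sub, Nat.add_sub_cancel]
    ring

end LocalEnergy

section GibbsExponent

variable {U1 U2 : Vc d → ℝ}

/-- The left reservoir variable `r₁` as a continuous linear map on phase space. -/
def resLeftL : Phs m d →L[ℝ] Vc d :=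
  (ContinuousLinearMap.fst ℝ _ _).comp
    ((ContinuousLinearMap.snd ℝ _ _).comp (ContinuousLinearMap.snd ℝ _ _))

/-- The right reservoir variable `rₙ` as a continuous linear map on phase space. -/
def resRightL : Phs m d →L[ℝ] Vc d :=
  (ContinuousLinearMap.snd ℝ _ _).comp
    ((ContinuousLinearMap.snd ℝ _ _).comp (ContinuousLinearMap.snd ℝ _ _))

theorem differentiable_Rj (h1 : Differentiable ℝ U1) (h2 : Differentiable ℝ U2) (T1 Tn : ℝ)
    (j : ℕ) : Differentiable ℝ (Rj T1 Tn U1 U2 j : Phs (n + 2) d → ℝ) := by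
  have hH := differentiable_Hloc (n := n) h1 h2
  unfold Rj
  fun_prop

theorem fderiv_Rj_apply (h1 : Differentiable ℝ U1) (h2 : Differentiable ℝ U2) (T1 Tn : ℝ) (j : ℕ)
    (x v : Phs (n + 2) d) :
    fderiv ℝ (Rj T1 Tn U1 U2 j) x v
      = 1 / T1 * ((∑ a, x.2.2.1 a * v.2.2.1 a)
          + ∑ k ∈ Finset.range j, fderiv ℝ (Hloc U1 U2 k) x v)
        + 1 / Tn * ((∑ k ∈ Finset.Ico j (n + 2), fderiv ℝ (Hloc U1 U2 k) x v)
          + ∑ a, x.2.2.2 a * v.2.2.2 a) := by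
  have hsum (s : Finset ℕ) := HasFDerivAt.fun_sum (u := s) fun k _ =>
    (differentiable_Hloc (n := n) h1 h2 k x).hasFDerivAt
  have h : HasFDerivAt (Rj T1 Tn U1 U2 j) _ x :=
    (((hasFDerivAt_half_sum_sq resLeftL x).add (hsum (Finset.range j))).const_mul (1 / T1)).add
      (((hsum (Finset.Ico j (n + 2))).add (hasFDerivAt_half_sum_sq resRightL x)).const_mul
        (1 / Tn))
  rw [h.fderiv]
  simp [resLeftL, resRightL, mul_add]

theorem fderiv_Rj_eR1 (h1 : Differentiable ℝ U1) (h2 : Differentiable ℝ U2) (T1 Tn : ℝ) (j : ℕ)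
    (x : Phs (n + 2) d) (a : Fin d) :
    fderiv ℝ (Rj T1 Tn U1 U2 j) x (eR1 a) = x.2.2.1 a / T1 := by
  have hHloc (k : ℕ) : fderiv ℝ (Hloc U1 U2 k) x (eR1 a) = 0 := by
    simp [fderiv_Hloc_apply h1 h2, eR1, cfgNat]
  simp only [fderiv_Rj_apply h1 h2, hHloc]
  simp [eR1, Pi.single_apply, div_eq_inv_mul]

theorem fderiv_Rj_eRn (h1 : Differentiable ℝ U1) (h2 : Differentiable ℝ U2) (T1 Tn : ℝ) (j : ℕ)
    (x : Phs (n + 2) d) (a : Fin d) :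
    fderiv ℝ (Rj T1 Tn U1 U2 j) x (eRn a) = x.2.2.2 a / Tn := by
  have hHloc (k : ℕ) : fderiv ℝ (Hloc U1 U2 k) x (eRn a) = 0 := by
    simp [fderiv_Hloc_apply h1 h2, eRn, cfgNat]
  simp only [fderiv_Rj_apply h1 h2, hHloc]
  simp [eRn, Pi.single_apply, div_eq_inv_mul]

theorem fderiv_Rj_drift (h1 : Differentiable ℝ U1) (h2 : Differentiable ℝ U2) (lam T1 Tn : ℝ)
    {j : ℕ} (hj : j ≤ n + 2) (x : Phs (n + 2) d) :
    fderiv ℝ (Rj T1 Tn U1 U2 j) x (drift lam U1 U2 x) = sigmaEP lam T1 Tn U2 j x := by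
  have hsum {a b : ℕ} (hab : a ≤ b) (hb : b ≤ n + 2) :
      ∑ k ∈ Finset.Ico a b, fderiv ℝ (Hloc U1 U2 k) x (drift lam U1 U2 x)
        = heatFlow lam U2 a x - heatFlow lam U2 b x := by
    rw [← neg_sub (heatFlow lam U2 b x), ← Finset.sum_Ico_sub (heatFlow lam U2 · x) hab,
      ← Finset.sum_neg_distrib]
    refine Finset.sum_congr rfl fun k hk => ?_
    rw [fderiv_Hloc_drift h1 h2 lam ((Finset.mem_Ico.1 hk).2.trans_le hb), neg_sub]
  have hleft : ∑ a, x.2.2.1 a * (drift lam U1 U2 x).2.2.1 a = -heatFlow lam U2 0 x := by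
    simp [drift, heatFlow, Finset.mul_sum, mul_left_comm]
  have hright : ∑ a, x.2.2.2 a * (drift lam U1 U2 x).2.2.2 a = heatFlow lam U2 (n + 2) x := by
    simp [drift, heatFlow, Finset.mul_sum, mul_left_comm]
  rw [fderiv_Rj_apply h1 h2, Finset.range_eq_Ico, hsum j.zero_le hj, hsum hj le_rfl, hleft, hright,
    sigmaEP]
  ring

theorem Rj_timeReversal (T1 Tn : ℝ) (U1 U2 : Vc d → ℝ) (j : ℕ) (x : Phs (n + 2) d) :
    Rj T1 Tn U1 U2 j (timeReversal x) = Rj T1 Tn U1 U2 j x := by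
  simp only [Rj, Hloc, timeReversal_apply, cfgNat_neg, Pi.neg_apply, neg_sq]

end GibbsExponent

theorem stmt2_general (n d : ℕ) (γ lam T1 Tn : ℝ) (hT1 : T1 ≠ 0) (hTn : Tn ≠ 0)
    (U1 U2 : Vc d → ℝ) (hU1 : Differentiable ℝ U1) (hU2 : Differentiable ℝ U2)
    (j : ℕ) (hj : j ≤ n + 2) (f : Phs (n + 2) d → ℝ) (hf : ContDiff ℝ 2 f) (x : Phs (n + 2) d) :
    Real.exp (Rj T1 Tn U1 U2 j x)
        * Jop (genT γ lam T1 Tn U1 U2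
            (fun z => Real.exp (-Rj T1 Tn U1 U2 j z) * Jop f z)) x
      = gen γ lam T1 Tn U1 U2 f x - sigmaEP lam T1 Tn U2 j x * f x := by
  have hR : Differentiable ℝ (Rj T1 Tn U1 U2 j : Phs (n + 2) d → ℝ) :=
    differentiable_Rj hU1 hU2 T1 Tn j
  have heven : (fun z => Real.exp (-Rj T1 Tn U1 U2 j z) * Jop f z)
      = Jop fun z => Real.exp (-Rj T1 Tn U1 U2 j z) * f z := by
    simp only [Jop_eq_comp_timeReversal, Function.comp_def, Rj_timeReversal]
  have hleft := exp_mul_ouAdjoint_exp_neg_mul (r := fun a y => y.2.2.1 a) hT1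
    (fun a => by fun_prop) hR (fderiv_Rj_eR1 hU1 hU2 T1 Tn j) hf x
  have hright := exp_mul_ouAdjoint_exp_neg_mul (r := fun a y => y.2.2.2 a) hTn
    (fun a => by fun_prop) hR (fderiv_Rj_eRn hU1 hU2 T1 Tn j) hf x
  have hdrift : Real.exp (Rj T1 Tn U1 U2 j x) * PD (fun z => Real.exp (-Rj T1 Tn U1 U2 j z) * f z)
      x (drift lam U1 U2 x) = PD f x (drift lam U1 U2 x) - sigmaEP lam T1 Tn U2 j x * f x := by
    rw [PD, fderiv_exp_neg_mul_apply (hR x) (hf.differentiable two_ne_zero x),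
      fderiv_Rj_drift hU1 hU2 lam T1 Tn hj, ← mul_assoc, ← Real.exp_add, add_neg_cancel,
      Real.exp_zero, one_mul, PD]
  rw [heven, Jop_genT_Jop, gen_eq_ouGen_add_PD_drift, ← hleft, ← hright]
  linear_combination hdrift

/-- for every j ∈ {0,…,n+2} (chain of n+2 oscillators) and every
smooth f one has the conjugation identity
`e^{R_j} · J[Lᵀ(e^{−R_j}·(Jf))] = L f − σ_j f`. -/
theorem stmt2 (n d : ℕ) (hd : 1 ≤ d) (γ lam T1 Tn : ℝ)
    (hγ : 0 < γ) (hlam : 0 < lam) (hT1 : 0 < T1) (hTn : 0 < Tn)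
    (U1 U2 : Vc d → ℝ) (hU1 : ContDiff ℝ (⊤ : ℕ∞) U1) (hU2 : ContDiff ℝ (⊤ : ℕ∞) U2) :
    ∀ j : ℕ, j ≤ n + 2 → ∀ f : Phs (n+2) d → ℝ, ContDiff ℝ (⊤ : ℕ∞) f →
      ∀ x : Phs (n+2) d,
        Real.exp (Rj T1 Tn U1 U2 j x)
            * Jop (genT γ lam T1 Tn U1 U2
                (fun z => Real.exp (- Rj T1 Tn U1 U2 j z) * Jop f z)) x
          = gen γ lam T1 Tn U1 U2 f x - sigmaEP lam T1 Tn U2 j x * f x := by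
  intro j hj f hf x
  exact stmt2_general n d γ lam T1 Tn hT1.ne' hTn.ne' U1 U2 (hU1.differentiable (by simp))
    (hU2.differentiable (by simp)) j hj f (hf.of_le (WithTop.coe_le_coe.2 le_top)) x

end
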